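/- For all positive integers a and b with a ≠ b, R⁺(a,b) < R⁺(⌊(a+b)/2⌋, ⌊(a+b)/2⌋). -/

import Mathlib

/-- The Beta function `B(a,b) = ∫₀¹ t^(a-1) (1-t)^(b-1) dt`. -/
noncomputable def betaFn (a b : ℝ) : ℝ := ∫ t in (0:ℝ)..1, t ^ (a - 1) * (1 - t) ^ (b - 1)

/-- `I(a,b)`: the probability that a `Beta(a,b)` random variable is `≥ 1/2`. -/
noncomputable def I (a b : ℝ) : ℝ :=
  (1 / betaFn a b) * ∫ t in (1/2 : ℝ)..1, t ^ (a - 1) * (1 - t) ^ (b - 1)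

/-- `h(x) = max (x, 1-x)`. -/
noncomputable def hFn (x : ℝ) : ℝ := max x (1 - x)

/-- Expected stage-wise reward. -/
noncomputable def R (a b : ℝ) : ℝ :=
  a / (a + b) * (hFn (I (a + 1) b) - hFn (I a b)) +
    b / (a + b) * (hFn (I a (b + 1)) - hFn (I a b))

/-- Optimistic knowledge-gradient reward. -/
noncomputable def Rplus (a b : ℝ) : ℝ :=
  max (hFn (I (a + 1) b) - hFn (I a b)) (hFn (I a (b + 1)) - hFn (I a b))

/-- Pessimistic knowledge-gradient reward. -/
noncomputable def Rminus (a b : ℝ) : ℝ :=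
  min (hFn (I (a + 1) b) - hFn (I a b)) (hFn (I a (b + 1)) - hFn (I a b))

/-!
Integration by parts gives `I (a + 1) b = I a b + tailIncr a b`, and comparing integrands on
`[1/2, 1]` shows that for `b ≤ a` this is the better of the two steps, so that
`Rplus a b = tailIncr a b`. Since `(a + 1) * tailIncr (a + 1) b = b * tailIncr a (b + 1)`, moving a
unit from the larger parameter to the smaller increases `tailIncr`. For an even sum these moves end
at a diagonal point `(m, m)`; for an odd sum they end at `(m, m + 1)`, where
`tailIncr m (m + 1) = tailIncr m m`.
-/

open MeasureTheory Set

/-- The upper incomplete Beta integral `∫ₓ¹ t^(a-1) (1-t)^(b-1) dt`. The Beta function is its value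
at `x = 0`, and `I a b` is the ratio of its values at `x = 1/2` and `x = 0`. -/
noncomputable def betaTail (x a b : ℝ) : ℝ := ∫ t in x..1, t ^ (a - 1) * (1 - t) ^ (b - 1)

/-- The amount by which the probability `I a b` grows when `a` is replaced by `a + 1`. -/
noncomputable def tailIncr (a b : ℝ) : ℝ := (1 / 2) ^ (a + b) / (a * betaFn a b)

section BetaTail

variable {x a b : ℝ}

lemma I_eq_betaTail_div : I a b = betaTail (1 / 2) a b / betaFn a b :=
  one_div_mul_eq_div _ _

lemma intervalIntegrable_beta (ha : 0 < a) (hb : 0 < b) :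
    IntervalIntegrable (fun t : ℝ ↦ t ^ (a - 1) * (1 - t) ^ (b - 1)) volume 0 1 := by
  have hcomplex : IntervalIntegrable
      (fun t : ℝ ↦ (t : ℂ) ^ ((a : ℂ) - 1) * (1 - (t : ℂ)) ^ ((b : ℂ) - 1)) volume 0 1 :=
    Complex.betaIntegral_convergent (by simpa) (by simpa)
  refine hcomplex.norm.congr_uIoo fun t ht ↦ ?_
  rw [uIoo_of_le zero_le_one] at ht
  have hpow {y : ℝ} (hy : 0 < y) (s : ℝ) : ‖(y : ℂ) ^ ((s : ℂ) - 1)‖ = y ^ (s - 1) := by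
    simp [Complex.norm_cpow_eq_rpow_re_of_pos hy]
  have hsub : (1 : ℂ) - t = (1 - t : ℝ) := by push_cast; rfl
  simp only [norm_mul, hsub, hpow ht.1, hpow (sub_pos.2 ht.2)]

lemma intervalIntegrable_beta_of_mem (ha : 0 < a) (hb : 0 < b) {y : ℝ} (hx : x ∈ Icc 0 1)
    (hy : y ∈ Icc 0 1) :
    IntervalIntegrable (fun t : ℝ ↦ t ^ (a - 1) * (1 - t) ^ (b - 1)) volume x y :=
  (intervalIntegrable_beta ha hb).mono_set <|
    uIcc_of_le (zero_le_one (α := ℝ)) ▸ uIcc_subset_Icc hx hy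

lemma betaTail_pos (ha : 0 < a) (hb : 0 < b) (hx : x ∈ Ico 0 1) : 0 < betaTail x a b := by
  refine intervalIntegral.intervalIntegral_pos_of_pos_on
    (intervalIntegrable_beta_of_mem ha hb (Ico_subset_Icc_self hx) (right_mem_Icc.2 zero_le_one))
    (fun t ht ↦ mul_pos ?_ ?_) hx.2
  · exact Real.rpow_pos_of_pos (hx.1.trans_lt ht.1) _
  · exact Real.rpow_pos_of_pos (sub_pos.2 ht.2) _

lemma betaFn_pos (ha : 0 < a) (hb : 0 < b) : 0 < betaFn a b :=
  betaTail_pos ha hb ⟨le_rfl, one_pos⟩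

lemma betaTail_add_one_add_betaTail_add_one (ha : 0 < a) (hb : 0 < b) (hx : x ∈ Icc 0 1) :
    betaTail x (a + 1) b + betaTail x a (b + 1) = betaTail x a b := by
  have h1 : (1 : ℝ) ∈ Icc 0 1 := right_mem_Icc.2 zero_le_one
  unfold betaTail
  rw [← intervalIntegral.integral_add
    (intervalIntegrable_beta_of_mem (by positivity) hb hx h1)
    (intervalIntegrable_beta_of_mem ha (by positivity) hx h1)]
  refine intervalIntegral.integral_congr_Ioo_of_le hx.2 fun t ht ↦ ?_
  have hpow {y : ℝ} (hy : 0 < y) (s : ℝ) : y ^ (s + 1 - 1) = y * y ^ (s - 1) := by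
    rw [add_sub_right_comm, Real.rpow_add_one hy.ne', mul_comm]
  simp only [hpow (hx.1.trans_lt ht.1) a, hpow (sub_pos.2 ht.2) b]
  ring

lemma mul_betaTail_add_one_right (ha : 0 < a) (hb : 0 < b) (hx : x ∈ Icc 0 1) :
    a * betaTail x a (b + 1) = b * betaTail x (a + 1) b - x ^ a * (1 - x) ^ b := by
  have h1 : (1 : ℝ) ∈ Icc 0 1 := right_mem_Icc.2 zero_le_one
  have hright := (intervalIntegrable_beta_of_mem ha (add_pos hb one_pos) hx h1).const_mul a
  have hleft := (intervalIntegrable_beta_of_mem (add_pos ha one_pos) hb hx h1).const_mul b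
  have hcont : Continuous fun t : ℝ ↦ t ^ a * (1 - t) ^ b :=
    (Real.continuous_rpow_const ha.le).mul
      ((Real.continuous_rpow_const hb.le).comp (continuous_sub_left 1))
  have hderiv (t : ℝ) (ht : t ∈ Ioo x 1) : HasDerivAt (fun t : ℝ ↦ t ^ a * (1 - t) ^ b)
      (a * (t ^ (a - 1) * (1 - t) ^ (b + 1 - 1)) -
        b * (t ^ (a + 1 - 1) * (1 - t) ^ (b - 1))) t := by
    have hpow := Real.hasDerivAt_rpow_const (p := a) (Or.inl (hx.1.trans_lt ht.1).ne')
    have hpow_sub := ((hasDerivAt_id t).const_sub 1).rpow_const (p := b)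
      (Or.inl (sub_pos.2 ht.2).ne')
    refine (hpow.mul hpow_sub).congr_deriv ?_
    simp only [add_sub_cancel_right, id]
    ring
  have hftc := intervalIntegral.integral_eq_sub_of_hasDerivAt_of_le hx.2 hcont.continuousOn hderiv
    (hright.sub hleft)
  rw [intervalIntegral.integral_sub hright hleft, intervalIntegral.integral_const_mul,
    intervalIntegral.integral_const_mul, sub_self, Real.zero_rpow hb.ne', mul_zero] at hftc
  unfold betaTail
  linear_combination hftc

lemma add_mul_betaTail_add_one_left (ha : 0 < a) (hb : 0 < b) (hx : x ∈ Icc 0 1) :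
    (a + b) * betaTail x (a + 1) b = a * betaTail x a b + x ^ a * (1 - x) ^ b := by
  linear_combination
    a * betaTail_add_one_add_betaTail_add_one ha hb hx - mul_betaTail_add_one_right ha hb hx

lemma betaTail_one_sub (x a b : ℝ) :
    betaTail (1 - x) b a = ∫ t in 0..x, t ^ (a - 1) * (1 - t) ^ (b - 1) := by
  have h := intervalIntegral.integral_comp_sub_left (a := 0) (b := x)
    (fun t : ℝ ↦ t ^ (b - 1) * (1 - t) ^ (a - 1)) 1
  simp only [sub_sub_cancel, sub_zero] at h
  simp only [betaTail, ← h, mul_comm]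

lemma betaTail_add_betaTail_one_sub (ha : 0 < a) (hb : 0 < b) (hx : x ∈ Icc 0 1) :
    betaTail x a b + betaTail (1 - x) b a = betaFn a b := by
  rw [betaTail_one_sub, add_comm]
  exact intervalIntegral.integral_add_adjacent_intervals
    (intervalIntegrable_beta_of_mem ha hb (left_mem_Icc.2 zero_le_one) hx)
    (intervalIntegrable_beta_of_mem ha hb hx (right_mem_Icc.2 zero_le_one))

lemma betaTail_le_betaTail_of_add_eq {a' b' : ℝ} (ha : 0 < a) (hb' : 0 < b') (haa' : a ≤ a')
    (hsum : a + b = a' + b') (hx : x ∈ Icc (1 / 2) 1) : betaTail x a b ≤ betaTail x a' b' := by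
  have hx' : x ∈ Icc (0 : ℝ) 1 := ⟨by linarith [hx.1], hx.2⟩
  have h1 : (1 : ℝ) ∈ Icc 0 1 := right_mem_Icc.2 zero_le_one
  refine intervalIntegral.integral_mono_on_of_le_Ioo hx.2
    (intervalIntegrable_beta_of_mem ha (by linarith) hx' h1)
    (intervalIntegrable_beta_of_mem (by linarith) hb' hx' h1) fun t ht ↦ ?_
  have ht0 : 0 < t := by linarith [hx.1, ht.1]
  have ht1 : 0 < 1 - t := sub_pos.2 ht.2
  calc t ^ (a - 1) * (1 - t) ^ (b - 1)
      = t ^ (a - 1) * (1 - t) ^ (b' - 1) * (1 - t) ^ (a' - a) := by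
        rw [mul_assoc, ← Real.rpow_add ht1]; congr 2; linarith
    _ ≤ t ^ (a - 1) * (1 - t) ^ (b' - 1) * t ^ (a' - a) := by
        have hle : 1 - t ≤ t := by linarith [hx.1, ht.1]
        gcongr
    _ = t ^ (a' - 1) * (1 - t) ^ (b' - 1) := by
        rw [mul_right_comm, ← Real.rpow_add ht0]; congr 2; linarith

lemma betaFn_symm (a b : ℝ) : betaFn b a = betaFn a b := by
  have h := betaTail_one_sub 1 a b
  rwa [sub_self] at h

lemma add_mul_betaFn_add_one_left (ha : 0 < a) (hb : 0 < b) :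
    (a + b) * betaFn (a + 1) b = a * betaFn a b := by
  have h := add_mul_betaTail_add_one_left ha hb (left_mem_Icc.2 zero_le_one)
  rwa [Real.zero_rpow ha.ne', zero_mul, add_zero] at h

lemma add_mul_betaFn_add_one_right (ha : 0 < a) (hb : 0 < b) :
    (a + b) * betaFn a (b + 1) = b * betaFn a b := by
  rw [betaFn_symm, add_comm a b, add_mul_betaFn_add_one_left hb ha, betaFn_symm]

end BetaTail

section Probability

variable {a b : ℝ}

lemma I_symm (ha : 0 < a) (hb : 0 < b) : I b a = 1 - I a b := by
  have h := betaTail_add_betaTail_one_sub ha hb (x := 1 / 2) ⟨by norm_num, by norm_num⟩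
  rw [sub_half 1] at h
  rw [I_eq_betaTail_div, I_eq_betaTail_div, betaFn_symm a b, eq_sub_iff_add_eq, ← add_div,
    add_comm, h, div_self (betaFn_pos ha hb).ne']

lemma tailIncr_pos (ha : 0 < a) (hb : 0 < b) : 0 < tailIncr a b :=
  div_pos (by positivity) (mul_pos ha (betaFn_pos ha hb))

lemma I_add_one_left (ha : 0 < a) (hb : 0 < b) : I (a + 1) b = I a b + tailIncr a b := by
  have hB := betaFn_pos ha hb
  have hB' : betaFn (a + 1) b = a * betaFn a b / (a + b) := by
    rw [eq_div_iff (by positivity), mul_comm, add_mul_betaFn_add_one_left ha hb]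
  have hT : betaTail (1 / 2) (a + 1) b =
      (a * betaTail (1 / 2) a b + (1 / 2) ^ (a + b)) / (a + b) := by
    have h := add_mul_betaTail_add_one_left ha hb (x := 1 / 2) ⟨by norm_num, by norm_num⟩
    rw [sub_half 1, ← Real.rpow_add (by norm_num)] at h
    rw [eq_div_iff (by positivity), mul_comm, h]
  rw [I_eq_betaTail_div, I_eq_betaTail_div, tailIncr, hB', hT]
  field_simp

lemma I_lt_I_add_one_left (ha : 0 < a) (hb : 0 < b) : I a b < I (a + 1) b :=
  I_add_one_left ha hb ▸ lt_add_of_pos_right _ (tailIncr_pos ha hb)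

lemma I_add_one_right_lt (ha : 0 < a) (hb : 0 < b) : I a (b + 1) < I a b := by
  linarith [I_symm ha hb, I_symm ha (show 0 < b + 1 by positivity), I_lt_I_add_one_left hb ha]

lemma one_half_le_I (hb : 0 < b) (hba : b ≤ a) : 1 / 2 ≤ I a b := by
  have ha : 0 < a := hb.trans_le hba
  have h : I b a ≤ I a b := by
    rw [I_eq_betaTail_div, I_eq_betaTail_div, betaFn_symm a b]
    gcongr
    · exact (betaFn_pos ha hb).le
    · exact betaTail_le_betaTail_of_add_eq hb hb hba (add_comm b a) ⟨le_rfl, by norm_num⟩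
  linarith [I_symm ha hb]

lemma I_add_one_right_le_of_le (hb : 0 < b) (hba : b ≤ a) : I b (a + 1) ≤ I a (b + 1) := by
  have ha : 0 < a := hb.trans_le hba
  have hB : betaFn a (b + 1) ≤ betaFn b (a + 1) := by
    refine le_of_mul_le_mul_left ?_ (add_pos ha hb)
    calc (a + b) * betaFn a (b + 1) = b * betaFn a b := add_mul_betaFn_add_one_right ha hb
      _ ≤ a * betaFn a b := by gcongr; exact (betaFn_pos ha hb).le
      _ = (a + b) * betaFn b (a + 1) := by
        rw [← betaFn_symm a b, add_comm a b, add_mul_betaFn_add_one_right hb ha]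
  have hT : betaTail (1 / 2) b (a + 1) ≤ betaTail (1 / 2) a (b + 1) :=
    betaTail_le_betaTail_of_add_eq hb (by positivity) hba (by ring) ⟨le_rfl, by norm_num⟩
  have hT0 : 0 ≤ betaTail (1 / 2) a (b + 1) :=
    (betaTail_pos ha (by positivity) ⟨by norm_num, by norm_num⟩).le
  rw [I_eq_betaTail_div, I_eq_betaTail_div]
  exact div_le_div₀ hT0 hT (betaFn_pos ha (by positivity)) hB

end Probability

section Reward

variable {a b : ℝ}

lemma hFn_of_one_half_le {x : ℝ} (hx : 1 / 2 ≤ x) : hFn x = x :=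
  max_eq_left (by linarith)

lemma hFn_one_sub (x : ℝ) : hFn (1 - x) = hFn x := by
  rw [hFn, hFn, sub_sub_cancel, max_comm]

lemma Rplus_symm (ha : 0 < a) (hb : 0 < b) : Rplus b a = Rplus a b := by
  rw [Rplus, Rplus, I_symm ha hb, I_symm ha (show 0 < b + 1 by positivity),
    I_symm (show 0 < a + 1 by positivity) hb, hFn_one_sub, hFn_one_sub, hFn_one_sub, max_comm]

lemma Rplus_eq_tailIncr (hb : 0 < b) (hba : b ≤ a) : Rplus a b = tailIncr a b := by
  have ha : 0 < a := hb.trans_le hba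
  have hleft : hFn (I (a + 1) b) = I (a + 1) b :=
    hFn_of_one_half_le (one_half_le_I hb (by linarith))
  have hright : hFn (I a (b + 1)) ≤ I (a + 1) b := by
    refine max_le ((I_add_one_right_lt ha hb).trans (I_lt_I_add_one_left ha hb)).le ?_
    linarith [I_add_one_right_le_of_le hb hba, I_symm (show 0 < a + 1 by positivity) hb]
  rw [Rplus, hFn_of_one_half_le (one_half_le_I hb hba), hleft,
    max_eq_left (sub_le_sub_right hright _), I_add_one_left ha hb, add_sub_cancel_left]

end Reward

section Increment

variable {a b : ℝ}

lemma tailIncr_add_one_right_self (ha : 0 < a) : tailIncr a (a + 1) = tailIncr a a := by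
  have hB : 2 * betaFn a (a + 1) = betaFn a a :=
    mul_left_cancel₀ ha.ne' (by linear_combination add_mul_betaFn_add_one_right ha ha)
  rw [tailIncr, tailIncr, ← hB, ← add_assoc, Real.rpow_add_one (by norm_num)]
  field_simp

lemma add_one_mul_tailIncr_add_one_left (ha : 0 < a) (hb : 0 < b) :
    (a + 1) * tailIncr (a + 1) b = b * tailIncr a (b + 1) := by
  have hB : b * betaFn (a + 1) b = a * betaFn a (b + 1) := by
    refine mul_left_cancel₀ (add_pos ha hb).ne' ?_
    linear_combination
      b * add_mul_betaFn_add_one_left ha hb - a * add_mul_betaFn_add_one_right ha hb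
  have hpos := betaFn_pos (add_pos ha one_pos) hb
  rw [tailIncr, tailIncr, ← hB, add_right_comm, ← add_assoc]
  field_simp

lemma tailIncr_add_one_lt (ha : 0 < a) (hb : 0 < b) (hba : b < a + 1) :
    tailIncr (a + 1) b < tailIncr a (b + 1) := by
  refine lt_of_mul_lt_mul_left ?_ (show 0 ≤ a + 1 by positivity)
  rw [add_one_mul_tailIncr_add_one_left ha hb]
  exact mul_lt_mul_of_pos_right hba (tailIncr_pos ha (by positivity))

lemma tailIncr_add_natCast_lt (ha : 0 < a) (hb : 0 < b) {k : ℕ} (hk : 1 ≤ k) (hba : b + k ≤ a + 1) :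
    tailIncr (a + k) b < tailIncr a (b + k) := by
  induction k, hk using Nat.le_induction generalizing b with
  | base => simpa using tailIncr_add_one_lt ha hb (by push_cast at hba; linarith)
  | succ k hk ih =>
    push_cast at hba ⊢
    calc tailIncr (a + (k + 1)) b = tailIncr (a + k + 1) b := by rw [add_assoc]
      _ < tailIncr (a + k) (b + 1) := tailIncr_add_one_lt (by positivity) hb (by linarith)
      _ < tailIncr a (b + 1 + k) := ih (by positivity) (by linarith)
      _ = tailIncr a (b + (k + 1)) := by rw [add_right_comm, add_assoc]

lemma tailIncr_add_natCast_lt_diag (hb : 0 < b) {n : ℕ} (hn : n ≠ 0) :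
    tailIncr (b + n) b < tailIncr (b + (n / 2 : ℕ)) (b + (n / 2 : ℕ)) := by
  obtain ⟨k, rfl | rfl⟩ := Nat.even_or_odd' n
  · rw [Nat.mul_div_cancel_left k two_pos]
    convert! tailIncr_add_natCast_lt (a := b + k) (by positivity) hb (k := k) (by lia) (by linarith)
      using 2
    push_cast
    ring
  · rw [show (2 * k + 1) / 2 = k by lia, ← tailIncr_add_one_right_self (by positivity)]
    convert! tailIncr_add_natCast_lt (a := b + k) (by positivity) hb (k := k + 1) (by lia)
      (by push_cast; linarith) using 2 <;>
    · push_cast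
      ring

end Increment

/-- The real shift `c` makes `(c + a, c + b)` an arbitrary pair of positive reals whose difference
is a nonzero integer. -/
theorem Rplus_lt_diag_general {a b : ℕ} (c : ℝ) (ha : 0 < c + a) (hb : 0 < c + b) (hab : a ≠ b) :
    Rplus (c + a) (c + b) < Rplus (c + ((a + b) / 2 : ℕ)) (c + ((a + b) / 2 : ℕ)) := by
  wlog hba : b < a generalizing a b
  · rw [Rplus_symm hb ha, add_comm a b]
    exact this hb ha hab.symm (by lia)
  obtain ⟨n, rfl⟩ := Nat.exists_eq_add_of_le hba.le
  have hmid : (c : ℝ) + ((b + n + b) / 2 : ℕ) = c + b + (n / 2 : ℕ) := by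
    rw [show (b + n + b) / 2 = b + n / 2 by lia, Nat.cast_add, add_assoc]
  rw [hmid, Nat.cast_add, ← add_assoc, Rplus_eq_tailIncr hb (by simp),
    Rplus_eq_tailIncr (by positivity) le_rfl]
  exact tailIncr_add_natCast_lt_diag hb (by lia)

theorem Rplus_lt_diag (a b : ℕ) (ha : 0 < a) (hb : 0 < b) (hab : a ≠ b) :
    Rplus a b < Rplus (((a + b) / 2 : ℕ) : ℝ) (((a + b) / 2 : ℕ) : ℝ) := by
  simpa only [zero_add] using Rplus_lt_diag_general 0 (by simpa) (by simpa) hab
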